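/- Let n ≥ 2 and let E ⊂ ℝⁿ be an 𝓗ˢ-measurable set with 0 < 𝓗ˢ(E) < ∞, where s = dim_H E > 1. Then there exists a set X ⊂ S^{n−1} of unit vectors with dim_H X ≤ n − s such that for every unit vector e ∈ S^{n−1} \ X and every 𝓗ˢ-measurable set F ⊂ E with 𝓗ˢ(F) > 0, the set {⟨x, e⟩ : x ∈ F} ⊂ ℝ has positive one-dimensional Lebesgue measure. -/

import Mathlib

open MeasureTheory RealInnerProductSpace

/-!
Let `ν` be the restriction of `𝓗ˢ` to `E`. By a Vitali covering, `𝓗ˢ`-almost every point `x`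
satisfies `ν (B(x, r)) ≤ C rˢ` for some `C` and all `r`, so `ν` is carried by countably many bounded
pieces on which `C` is uniform. On each piece, testing against a Gaussian of width `R` bounds the
Fourier energy `∫ |ν̂|²` over the ball of radius `R` by a constant times `Rⁿ⁻ˢ`.

As the piece is bounded, `|ν̂ (p)|²` is controlled by an average of the same kind of function over a
small ball around `p`. The tubes around the segments `{r e : 2ᵏ ≤ r ≤ 2ᵏ⁺¹}` are disjoint for
`2⁻ᵏ`-separated unit vectors `e`, so the energies of `ν̂` on these segments add up to at most a
constant times `2ᵏ⁽ⁿ⁻ˢ⁾`. Hence the directions whose `k`-th energy exceeds `(k + 1)⁻²` are covered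
by about `(k + 1)² 2ᵏ⁽ⁿ⁻ˢ⁾` balls of radius `2⁻ᵏ`, and those for which this happens infinitely often
form a set of dimension at most `n - s`. In every other direction `ν̂` is square integrable along
the line; its restriction to the line is the Fourier transform of the projection of `ν`, which is
therefore absolutely continuous by Plancherel.
-/

section Density

open Filter Metric Set
open scoped ENNReal NNReal Topology

variable {X : Type*} [MetricSpace X]

lemma ediam_closedBall_le (x : X) (r : ℝ) :
    ediam (closedBall x r) ≤ 2 * ENNReal.ofReal r := by
  rcases le_or_gt 0 r with hr | hr
  · simpa only [closedEBall_ofReal hr] using ediam_closedEBall_le (x := x) (r := ENNReal.ofReal r)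
  · simp [closedBall_eq_empty.2 hr]

variable [MeasurableSpace X]

/-- The set of points at which the `s`-dimensional growth condition `μ (B(x, r)) ≤ C rˢ` holds at
every scale. Nonpositive radii impose nothing, because the ball is then empty. -/
def ballGrowthSet (μ : Measure X) (s : ℝ) (C : ℝ≥0) : Set X :=
  {x | ∀ r : ℝ, μ (ball x r) ≤ C * ENNReal.ofReal r ^ s}

lemma isClosed_ballGrowthSet (μ : Measure X) (s : ℝ) (C : ℝ≥0) :
    IsClosed (ballGrowthSet μ s C) := by
  refine isClosed_of_closure_subset fun x hx r => ?_
  have hlim : Tendsto (fun r' => (C : ℝ≥0∞) * ENNReal.ofReal r' ^ s) (𝓝[>] r)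
      (𝓝 (C * ENNReal.ofReal r ^ s)) :=
    ENNReal.Tendsto.const_mul
      ((ENNReal.continuous_rpow_const.comp ENNReal.continuous_ofReal).tendsto r
        |>.mono_left nhdsWithin_le_nhds) (.inr ENNReal.coe_ne_top)
  refine ge_of_tendsto hlim ?_
  filter_upwards [self_mem_nhdsWithin] with r' hr'
  obtain ⟨y, hy, hxy⟩ := mem_closure_iff.1 hx (r' - r) (sub_pos.2 hr')
  exact (measure_mono (ball_subset_ball' (by linarith))).trans (hy r')

lemma ballGrowthSet_subset_of_le_smul {μ ν : Measure X} {K : ℝ≥0} (h : μ ≤ K • ν) (s : ℝ)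
    (C : ℝ≥0) : ballGrowthSet ν s C ⊆ ballGrowthSet μ s (K * C) := fun x hx r =>
  calc μ (ball x r) ≤ K * ν (ball x r) := h _
    _ ≤ K * (C * ENNReal.ofReal r ^ s) := by gcongr; exact hx r
    _ = (K * C : ℝ≥0) * ENNReal.ofReal r ^ s := by rw [ENNReal.coe_mul, mul_assoc]

lemma exists_radius_of_notMem_ballGrowthSet {μ : Measure X} [IsFiniteMeasure μ] {s : ℝ}
    (hs : 0 < s) {C : ℝ≥0} (hC : 0 < C) {x : X} (hx : x ∉ ballGrowthSet μ s C) :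
    ∃ r : ℝ, 0 < r ∧ r ≤ (μ.real univ / C) ^ s⁻¹ ∧
      C * ENNReal.ofReal r ^ s ≤ μ (closedBall x r) := by
  simp only [ballGrowthSet, mem_ofPred_eq, not_forall, not_le] at hx
  obtain ⟨r, hr⟩ := hx
  have hr0 : 0 < r := by
    by_contra! h
    simp [ball_eq_empty.2 h] at hr
  refine ⟨r, hr0, ?_, hr.le.trans (measure_mono ball_subset_closedBall)⟩
  have h := ENNReal.toReal_mono (measure_ne_top μ _) (hr.le.trans (measure_mono (subset_univ _)))
  rw [ENNReal.toReal_mul, ENNReal.coe_toReal, ← ENNReal.toReal_rpow,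
    ENNReal.toReal_ofReal hr0.le] at h
  rwa [Real.le_rpow_inv_iff_of_pos hr0.le (by positivity) hs, le_div_iff₀' (by exact_mod_cast hC)]

variable [BorelSpace X]

lemma lintegral_comp_mul_dist_le {μ : Measure X} {s : ℝ} {C : ℝ≥0} {x : X}
    (hx : x ∈ ballGrowthSet μ s C) {φ : ℝ → ℝ≥0∞} (hφ : AntitoneOn φ (Ici 0)) {R : ℝ}
    (hR : 0 < R) :
    ∫⁻ y, φ (R * dist x y) ∂μ ≤
      C * (∑' k : ℕ, φ k * ENNReal.ofReal (k + 1) ^ s) * ENNReal.ofReal R ^ (-s) := by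
  have hφ_le (y : X) : φ (R * dist x y) ≤
      ∑' k : ℕ, (ball x ((k + 1) / R)).indicator (fun _ => φ k) y := by
    have hy : 0 ≤ R * dist x y := by positivity
    set k := ⌊R * dist x y⌋₊
    have hk : y ∈ ball x ((k + 1) / R) := by
      rw [mem_ball', lt_div_iff₀' hR]
      exact Nat.lt_floor_add_one _
    calc φ (R * dist x y) ≤ φ k := hφ (mem_Ici.2 k.cast_nonneg) hy (Nat.floor_le hy)
      _ = (ball x ((k + 1) / R)).indicator (fun _ => φ k) y :=
        (indicator_of_mem hk fun _ => φ k).symm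
      _ ≤ _ := ENNReal.le_tsum (f := fun k : ℕ =>
        (ball x ((k + 1) / R)).indicator (fun _ => φ k) y) k
  have hscale (k : ℕ) : ENNReal.ofReal ((k + 1) / R) ^ s =
      ENNReal.ofReal (k + 1) ^ s * ENNReal.ofReal R ^ (-s) := by
    rw [ENNReal.ofReal_div_of_pos hR, div_eq_mul_inv,
      ENNReal.mul_rpow_of_ne_top (by simp) (by simp [hR]), ENNReal.inv_rpow, ENNReal.rpow_neg]
  calc ∫⁻ y, φ (R * dist x y) ∂μ
      ≤ ∑' k : ℕ, ∫⁻ y, (ball x ((k + 1) / R)).indicator (fun _ => φ k) y ∂μ := by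
        rw [← lintegral_tsum fun k => (measurable_const.indicator measurableSet_ball).aemeasurable]
        exact lintegral_mono hφ_le
    _ ≤ ∑' k : ℕ, φ k * (C * ENNReal.ofReal ((k + 1) / R) ^ s) :=
        ENNReal.tsum_le_tsum fun k => by
          rw [lintegral_indicator_const measurableSet_ball]
          gcongr
          exact hx _
    _ = C * (∑' k : ℕ, φ k * ENNReal.ofReal (k + 1) ^ s) * ENNReal.ofReal R ^ (-s) := by
        rw [← ENNReal.tsum_mul_left, ← ENNReal.tsum_mul_right]
        congr! 2 with k
        rw [hscale]
        ring

lemma hausdorffMeasure_eq_zero_of_closedBall_cover {s : ℝ} (hs : 0 ≤ s) {D : Set X}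
    {ι : ℕ → Type*} [∀ j, Countable (ι j)] {x : ∀ j, ι j → X} {r : ∀ j, ι j → ℝ} {δ : ℕ → ℝ}
    (hδ : Tendsto δ atTop (𝓝 0)) (hr : ∀ j a, r j a ≤ δ j)
    (hD : ∀ j, D ⊆ ⋃ a, closedBall (x j a) (r j a))
    (hsum : Tendsto (fun j => ∑' a, ENNReal.ofReal (r j a) ^ s) atTop (𝓝 0)) :
    μH[s] D = 0 := by
  have hδ' : Tendsto (fun j => 2 * ENNReal.ofReal (δ j)) atTop (𝓝 0) := by
    simpa using ENNReal.Tendsto.const_mul (a := 2) (ENNReal.tendsto_ofReal hδ) (by simp)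
  have hle := Measure.hausdorffMeasure_le_liminf_tsum s D (l := atTop) _ hδ'
    (fun j a => closedBall (x j a) (r j a))
    (.of_forall fun j a => (ediam_closedBall_le _ _).trans (by gcongr; exact hr j a))
    (.of_forall hD)
  have hbound (j : ℕ) : ∑' a, ediam (closedBall (x j a) (r j a)) ^ s ≤
      2 ^ s * ∑' a, ENNReal.ofReal (r j a) ^ s := by
    rw [← ENNReal.tsum_mul_left]
    exact ENNReal.tsum_le_tsum fun a => (ENNReal.rpow_le_rpow (ediam_closedBall_le _ _) hs).trans_eq
      (ENNReal.mul_rpow_of_nonneg _ _ hs)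
  have hzero : Tendsto (fun j => 2 ^ s * ∑' a, ENNReal.ofReal (r j a) ^ s) atTop (𝓝 0) := by
    simpa using ENNReal.Tendsto.const_mul hsum (.inr (by finiteness))
  exact le_antisymm (hle.trans ((liminf_le_liminf (.of_forall hbound)).trans_eq hzero.liminf_eq))
    zero_le

variable [TopologicalSpace.SeparableSpace X]

lemma exists_countable_closedBall_cover (μ : Measure X) {D : Set X} {r : X → ℝ} {s δ : ℝ}
    {C : ℝ≥0∞} (hr : ∀ x ∈ D, 0 < r x) (hδ : ∀ x ∈ D, r x ≤ δ)
    (hμ : ∀ x ∈ D, C * ENNReal.ofReal (r x) ^ s ≤ μ (closedBall x (r x))) :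
    ∃ u ⊆ D, u.Countable ∧ D ⊆ ⋃ a ∈ u, closedBall a (5 * r a) ∧
      C * ∑' a : u, ENNReal.ofReal (r a) ^ s ≤ μ univ := by
  obtain ⟨u, huD, hdisj, hcov⟩ := Vitali.exists_disjoint_subfamily_covering_enlargement_closedBall
    D id r δ hδ 5 (by norm_num)
  have hu : u.Countable := hdisj.countable_of_nonempty_interior fun a ha =>
    ⟨a, ball_subset_interior_closedBall (mem_ball_self (hr a (huD ha)))⟩
  refine ⟨u, huD, hu, fun x hx => ?_, ?_⟩
  · obtain ⟨a, ha, hsub⟩ := hcov x hx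
    exact mem_biUnion ha (hsub (mem_closedBall_self (hr x hx).le))
  calc C * ∑' a : u, ENNReal.ofReal (r a) ^ s
      = ∑' a : u, C * ENNReal.ofReal (r a) ^ s := ENNReal.tsum_mul_left.symm
    _ ≤ ∑' a : u, μ (closedBall a (r a)) :=
        ENNReal.tsum_le_tsum fun a => hμ a (huD a.2)
    _ = μ (⋃ a ∈ u, closedBall a (r a)) :=
        (measure_biUnion hu hdisj fun a _ => measurableSet_closedBall).symm
    _ ≤ μ univ := measure_mono (subset_univ _)

lemma hausdorffMeasure_compl_iUnion_ballGrowthSet (μ : Measure X) [IsFiniteMeasure μ] {s : ℝ}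
    (hs : 0 < s) : μH[s] (⋃ j : ℕ, ballGrowthSet μ s j)ᶜ = 0 := by
  set D := (⋃ j : ℕ, ballGrowthSet μ s j)ᶜ
  have hD (j : ℕ) (x : X) (hx : x ∈ D) := exists_radius_of_notMem_ballGrowthSet hs
    (C := (j + 1 : ℕ)) (by positivity) fun h => hx (mem_iUnion_of_mem (j + 1) h)
  choose! r hr0 hrδ hμ using hD
  choose u huD hu hcov hsum using fun j =>
    exists_countable_closedBall_cover μ (hr0 j) (hrδ j) (hμ j)
  have (j : ℕ) : Countable (u j) := (hu j).to_subtype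
  have hδ : Tendsto (fun j : ℕ => 5 * (μ.real univ / (j + 1 : ℕ)) ^ s⁻¹) atTop (𝓝 0) := by
    have h := ((tendsto_const_div_atTop_nhds_zero_nat (μ.real univ)).comp
      (tendsto_add_atTop_nat 1)).rpow_const (p := s⁻¹) (.inr (by positivity))
    rw [Real.zero_rpow (by positivity)] at h
    simpa using h.const_mul 5
  have hbound (j : ℕ) : ∑' a : u j, ENNReal.ofReal (5 * r j a) ^ s ≤
      5 ^ s * (μ univ / (j + 1 : ℕ)) := by
    calc ∑' a : u j, ENNReal.ofReal (5 * r j a) ^ s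
        = 5 ^ s * ∑' a : u j, ENNReal.ofReal (r j a) ^ s := by
          rw [← ENNReal.tsum_mul_left]
          congr! 2 with a
          rw [ENNReal.ofReal_mul (by norm_num), ENNReal.mul_rpow_of_nonneg _ _ hs.le]
          norm_num
      _ ≤ 5 ^ s * (μ univ / (j + 1 : ℕ)) := by
        gcongr
        rw [ENNReal.le_div_iff_mul_le (by simp) (by simp), mul_comm]
        exact_mod_cast hsum j
  have hzero : Tendsto (fun j : ℕ => 5 ^ s * (μ univ / (j + 1 : ℕ))) atTop (𝓝 0) := by
    have h := (ENNReal.Tendsto.const_div ENNReal.tendsto_nat_nhds_top (a := μ univ)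
      (.inr (measure_ne_top μ _))).comp (tendsto_add_atTop_nat 1)
    simpa using ENNReal.Tendsto.const_mul (a := 5 ^ s) h (.inr (by finiteness))
  exact hausdorffMeasure_eq_zero_of_closedBall_cover hs.le hδ
    (fun j (a : u j) => mul_le_mul_of_nonneg_left (hrδ j a (huD j a.2)) (by norm_num))
    (fun j => by simpa only [biUnion_eq_iUnion] using hcov j)
    (tendsto_of_tendsto_of_tendsto_of_le_of_le tendsto_const_nhds hzero (fun _ => zero_le) hbound)

end Density

section Limsup

open Filter Metric Set
open scoped ENNReal NNReal Topology

variable {X : Type*} [MetricSpace X] [MeasurableSpace X] [BorelSpace X]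

lemma hausdorffMeasure_limsup_eq_zero {A : ℕ → Set X} {δ : ℕ → ℝ≥0} {t : ℝ} (ht : 0 ≤ t)
    (hδ : Antitone δ) (hδ0 : Tendsto δ atTop (𝓝 0)) (hA : ∀ k, coveringNumber (δ k) (A k) ≠ ⊤)
    (hsum : ∑' k, (coveringNumber (δ k) (A k) : ℝ≥0∞) * (δ k : ℝ≥0∞) ^ t ≠ ∞) :
    μH[t] (limsup A atTop) = 0 := by
  have hfin (k : ℕ) : (minimalCover (δ k) (A k)).Finite := finite_minimalCover
  have (k : ℕ) : Countable (minimalCover (δ k) (A k)) := (hfin k).countable.to_subtype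
  refine hausdorffMeasure_eq_zero_of_closedBall_cover ht
    (ι := fun m => Σ k, minimalCover (δ (k + m)) (A (k + m)))
    (x := fun m a => a.2) (r := fun m a => δ (a.1 + m)) (δ := fun m => δ m)
    (NNReal.tendsto_coe.2 hδ0) (fun m a => mod_cast hδ (Nat.le_add_left m a.1))
    (fun m x hx => ?_) ?_
  · obtain ⟨k, hmk, hxk⟩ := (frequently_atTop.1 (mem_limsup_iff_frequently_mem.1 hx)) m
    obtain ⟨j, rfl⟩ := Nat.exists_eq_add_of_le' hmk
    obtain ⟨a, ha, hxa⟩ := mem_iUnion₂.1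
      ((isCover_minimalCover (hA (j + m))).subset_iUnion_closedBall hxk)
    exact mem_iUnion.2 ⟨⟨j, a, ha⟩, hxa⟩
  · convert! ENNReal.tendsto_sum_nat_add _ hsum using 2 with m
    simp_rw [ENNReal.tsum_sigma', ENNReal.ofReal_coe_nnreal]
    congr! 2 with k
    rw [ENNReal.tsum_set_const, encard_minimalCover (hA _)]

lemma summable_natCast_add_one_pow_mul_two_pow_rpow (p : ℕ) {d t : ℝ} (hdt : d < t) :
    Summable fun k : ℕ => ((k : ℝ) + 1) ^ p * (2 ^ k : ℝ) ^ d * ((1 / 2) ^ k : ℝ) ^ t := by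
  set q : ℝ := 2 ^ (d - t)
  have hq : 0 < q := by positivity
  have hq1 : q < 1 := Real.rpow_lt_one_of_one_lt_of_neg (by norm_num) (by linarith)
  have hsum : Summable fun k : ℕ => (k : ℝ) ^ p * q ^ k :=
    summable_pow_mul_geometric_of_norm_lt_one p (by rwa [Real.norm_of_nonneg hq.le])
  refine (((summable_nat_add_iff 1).2 hsum).mul_left q⁻¹).congr fun k => ?_
  have hpow : (2 ^ k : ℝ) ^ d * ((1 / 2) ^ k : ℝ) ^ t = q ^ k := by
    rw [one_div, inv_pow, Real.inv_rpow (by positivity), ← Real.rpow_neg (by positivity),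
      ← Real.rpow_add (by positivity), ← sub_eq_add_neg, ← Real.rpow_natCast,
      ← Real.rpow_natCast, ← Real.rpow_mul (by norm_num), ← Real.rpow_mul (by norm_num), mul_comm]
  rw [mul_assoc, hpow, pow_succ q]
  push_cast
  field_simp

lemma dimH_limsup_le {A : ℕ → Set X} {d : ℝ} {M : ℝ≥0∞} (hM : M ≠ ∞) (p : ℕ)
    (hA : ∀ k, (coveringNumber ((1 / 2) ^ k) (A k) : ℝ≥0∞) ≤
      M * ENNReal.ofReal ((k + 1) ^ p * (2 ^ k : ℝ) ^ d)) :
    dimH (limsup A atTop) ≤ ENNReal.ofReal d := by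
  refine dimH_le fun t ht => le_of_not_gt fun hdt => ?_
  have hdt' : d < t := lt_of_not_ge fun h => hdt.not_ge
    (ENNReal.ofReal_coe_nnreal.ge.trans (ENNReal.ofReal_le_ofReal h))
  have hfin (k : ℕ) : coveringNumber ((1 / 2) ^ k) (A k) ≠ ⊤ :=
    ENat.toENNReal_ne_top.1 (ne_top_of_le_ne_top (by finiteness) (hA k))
  have hbound (k : ℕ) : (coveringNumber ((1 / 2) ^ k) (A k) : ℝ≥0∞) *
      (((1 / 2) ^ k : ℝ≥0) : ℝ≥0∞) ^ (t : ℝ) ≤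
        M * ENNReal.ofReal ((k + 1) ^ p * (2 ^ k : ℝ) ^ d * ((1 / 2) ^ k : ℝ) ^ (t : ℝ)) := by
    have hδ : (((1 / 2) ^ k : ℝ≥0) : ℝ≥0∞) = ENNReal.ofReal ((1 / 2) ^ k) := by
      rw [← ENNReal.ofReal_coe_nnreal]
      push_cast
      rfl
    rw [ENNReal.ofReal_mul (by positivity), ← ENNReal.ofReal_rpow_of_pos (by positivity),
      ← mul_assoc, hδ]
    gcongr
    exact hA k
  have hsum := (summable_natCast_add_one_pow_mul_two_pow_rpow p hdt').tsum_ofReal_ne_top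
  refine ENNReal.zero_ne_top ((hausdorffMeasure_limsup_eq_zero t.2
    (pow_right_anti₀ (by positivity) (by norm_num)) ?_ hfin ?_).symm.trans ht)
  · exact NNReal.tendsto_pow_atTop_nhds_zero_of_lt_one (by norm_num)
  · refine ne_top_of_le_ne_top (ENNReal.mul_ne_top hM hsum) ?_
    exact (ENNReal.tsum_le_tsum hbound).trans_eq ENNReal.tsum_mul_left

end Limsup

section Plancherel

open Metric Set
open scoped ContDiff ENNReal FourierTransform Manifold SchwartzMap

lemma enorm_complex_ofReal (x : ℝ) : ‖(x : ℂ)‖ₑ = ‖x‖ₑ := by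
  rw [← ofReal_norm, Complex.norm_real, ofReal_norm]

lemma lintegral_mul_sq_le {α : Type*} [MeasurableSpace α] {μ : Measure α} {f g : α → ℝ≥0∞}
    (hf : AEMeasurable f μ) (hg : AEMeasurable g μ) :
    (∫⁻ a, f a * g a ∂μ) ^ 2 ≤ (∫⁻ a, f a ^ 2 ∂μ) * ∫⁻ a, g a ^ 2 ∂μ := by
  have h := ENNReal.lintegral_mul_le_Lp_mul_Lq μ Real.HolderConjugate.two_two hf hg
  simp only [Pi.mul_apply, ENNReal.rpow_ofNat, ← ENNReal.mul_rpow_of_nonneg _ _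
    (by norm_num : (0 : ℝ) ≤ 1 / 2)] at h
  calc (∫⁻ a, f a * g a ∂μ) ^ 2
      ≤ (((∫⁻ a, f a ^ 2 ∂μ) * ∫⁻ a, g a ^ 2 ∂μ) ^ (1 / 2 : ℝ)) ^ 2 := by gcongr
    _ = _ := by rw [← ENNReal.rpow_natCast, ← ENNReal.rpow_mul]; norm_num

variable {V : Type*} [NormedAddCommGroup V] [InnerProductSpace ℝ V] [FiniteDimensional ℝ V]

lemma exists_contDiff_hasCompactSupport_eq_one {K U : Set V} (hK : IsCompact K)
    (hU : IsOpen U) (hKU : K ⊆ U) :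
    ∃ g : V → ℝ, ContDiff ℝ ∞ g ∧ HasCompactSupport g ∧ EqOn g 1 K ∧ EqOn g 0 Uᶜ ∧
      ∀ x, g x ∈ Icc (0 : ℝ) 1 := by
  obtain ⟨R, hR⟩ := hK.isBounded.subset_ball (0 : V)
  obtain ⟨g, hg0, hg1, hg⟩ := exists_contMDiffMap_zero_one_of_isClosed 𝓘(ℝ, V) (n := ⊤)
    (s := (U ∩ ball 0 R)ᶜ) (t := K) (hU.inter isOpen_ball).isClosed_compl hK.isClosed
    (disjoint_compl_left_iff_subset.2 (subset_inter hKU hR))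
  refine ⟨g, g.contMDiff.contDiff, ?_, hg1, fun x hx => hg0 fun h => hx h.1, hg⟩
  exact HasCompactSupport.intro (isCompact_closedBall (0 : V) R)
    fun x hx => hg0 fun h => hx (ball_subset_closedBall h.2)

variable [MeasurableSpace V] [BorelSpace V]

lemma lintegral_comp_smul (f : V → ℝ≥0∞) {r : ℝ} (hr : r ≠ 0) :
    ∫⁻ x, f (r • x) = ENNReal.ofReal |(r ^ Module.finrank ℝ V)⁻¹| * ∫⁻ x, f x := by
  rw [← smul_eq_mul, ← lintegral_smul_measure, ← Measure.map_addHaar_smul volume hr]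
  exact ((Homeomorph.smulOfNeZero r hr).measurableEmbedding.lintegral_map f).symm

lemma lintegral_enorm_sq_eq_ofReal_integral (f : 𝓢(V, ℂ)) :
    ∫⁻ x, ‖f x‖ₑ ^ 2 = ENNReal.ofReal (∫ x, ‖f x‖ ^ 2) := by
  rw [ofReal_integral_eq_lintegral_ofReal ?_ (.of_forall fun x => by positivity)]
  · simp_rw [ENNReal.ofReal_pow (norm_nonneg _), ofReal_norm]
  · exact (f.memLp 2 volume).integrable_norm_pow (by norm_num)

lemma lintegral_enorm_sq_fourierInv (h : 𝓢(V, ℂ)) :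
    ∫⁻ ξ, ‖(𝓕⁻ h) ξ‖ₑ ^ 2 = ∫⁻ x, ‖h x‖ₑ ^ 2 := by
  rw [lintegral_enorm_sq_eq_ofReal_integral, lintegral_enorm_sq_eq_ofReal_integral,
    ← SchwartzMap.integral_norm_sq_fourier (𝓕⁻ h), FourierTransform.fourier_fourierInv_eq]

variable (ρ : Measure V) [IsFiniteMeasure ρ]

lemma integral_schwartz_eq_integral_charFun_mul (h : 𝓢(V, ℂ)) :
    ∫ x, h x ∂ρ = ∫ ξ, charFun ρ (-(2 * Real.pi) • ξ) * (𝓕⁻ h) ξ := by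
  have hflip := VectorFourier.integral_fourierIntegral_smul_eq_flip (e := Real.fourierChar)
    (L := innerₗ V) (μ := ρ) (ν := volume) (f := 1)
    (g := ⇑(𝓕⁻ h : 𝓢(V, ℂ)))
    Real.continuous_fourierChar continuous_inner (integrable_const 1) (𝓕⁻ h : 𝓢(V, ℂ)).integrable
  have hFI (ξ : V) : VectorFourier.fourierIntegral Real.fourierChar ρ (innerₗ V) 1 ξ =
      charFun ρ (-(2 * Real.pi) • ξ) := by
    rw [charFun_eq_fourierIntegral', smul_smul, neg_mul_neg,
      inv_mul_cancel₀ Real.two_pi_pos.ne', one_smul]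
  simp_rw [hFI, smul_eq_mul] at hflip
  rw [hflip]
  refine integral_congr_ae (.of_forall fun x => ?_)
  calc h x = 𝓕 (𝓕⁻ h : 𝓢(V, ℂ)) x := by rw [FourierTransform.fourier_fourierInv_eq]
    _ = 1 * VectorFourier.fourierIntegral Real.fourierChar volume (innerₗ V).flip
        (𝓕⁻ h : 𝓢(V, ℂ)) x := by rw [flip_innerₗ, one_mul]; rfl

lemma enorm_integral_schwartz_sq_le (h : 𝓢(V, ℂ)) :
    ‖∫ x, h x ∂ρ‖ₑ ^ 2 ≤
      (∫⁻ ξ, ‖charFun ρ (-(2 * Real.pi) • ξ)‖ₑ ^ 2) * ∫⁻ x, ‖h x‖ₑ ^ 2 := by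
  have hmeas : Measurable fun ξ => ‖charFun ρ (-(2 * Real.pi) • ξ)‖ₑ := by fun_prop
  calc ‖∫ x, h x ∂ρ‖ₑ ^ 2
      = ‖∫ ξ, charFun ρ (-(2 * Real.pi) • ξ) * (𝓕⁻ h) ξ‖ₑ ^ 2 := by
        rw [integral_schwartz_eq_integral_charFun_mul]
    _ ≤ (∫⁻ ξ, ‖charFun ρ (-(2 * Real.pi) • ξ)‖ₑ * ‖(𝓕⁻ h) ξ‖ₑ) ^ 2 := by
        gcongr
        simpa only [enorm_mul] using enorm_integral_le_lintegral_enorm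
          (fun ξ => charFun ρ (-(2 * Real.pi) • ξ) * (𝓕⁻ h) ξ)
    _ ≤ _ := by
        rw [← lintegral_enorm_sq_fourierInv h]
        exact lintegral_mul_sq_le hmeas.aemeasurable
          (𝓕⁻ h).continuous.measurable.enorm.aemeasurable

lemma measure_sq_le_lintegral_charFun_mul {K U : Set V} (hK : IsCompact K) (hU : IsOpen U)
    (hKU : K ⊆ U) :
    ρ K ^ 2 ≤ (∫⁻ ξ, ‖charFun ρ (-(2 * Real.pi) • ξ)‖ₑ ^ 2) * volume U := by
  obtain ⟨g, hg, hgc, hg1, hg0, hgI⟩ := exists_contDiff_hasCompactSupport_eq_one hK hU hKU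
  have hcs : HasCompactSupport fun x => (g x : ℂ) :=
    hgc.comp_left (g := fun t : ℝ => (t : ℂ)) Complex.ofReal_zero
  set h : 𝓢(V, ℂ) := hcs.toSchwartzMap (Complex.ofRealCLM.contDiff.comp hg)
  have hh (x : V) : h x = g x := rfl
  have hlower : ρ K ≤ ‖∫ x, h x ∂ρ‖ₑ := by
    simp_rw [hh]
    rw [integral_complex_ofReal, enorm_complex_ofReal,
      Real.enorm_of_nonneg (integral_nonneg fun x => (hgI x).1),
      ofReal_integral_eq_lintegral_ofReal (hg.continuous.integrable_of_hasCompactSupport hgc)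
        (.of_forall fun x => (hgI x).1), ← lintegral_indicator_one hK.measurableSet]
    refine lintegral_mono (indicator_le fun x hx => ?_)
    simp [hg1 hx]
  have hupper : ∫⁻ x, ‖h x‖ₑ ^ 2 ≤ volume U := by
    rw [← lintegral_indicator_one hU.measurableSet]
    refine lintegral_mono fun x => ?_
    by_cases hx : x ∈ U
    · simpa [hx, hh, enorm_complex_ofReal, Real.enorm_of_nonneg (hgI x).1] using pow_le_one₀ zero_le
        (ENNReal.ofReal_le_one.2 (hgI x).2)
    · simp [hx, hh, hg0 hx]
  calc ρ K ^ 2 ≤ ‖∫ x, h x ∂ρ‖ₑ ^ 2 := by gcongr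
    _ ≤ _ := enorm_integral_schwartz_sq_le ρ h
    _ ≤ _ := by gcongr

lemma absolutelyContinuous_of_lintegral_charFun_sq_ne_top
    (hρ : ∫⁻ ξ, ‖charFun ρ ξ‖ₑ ^ 2 ≠ ⊤) : ρ ≪ volume := by
  have hA : ∫⁻ ξ, ‖charFun ρ (-(2 * Real.pi) • ξ)‖ₑ ^ 2 ≠ ⊤ := by
    rw [lintegral_comp_smul (fun ξ => ‖charFun ρ ξ‖ₑ ^ 2) (by simp [Real.pi_ne_zero])]
    finiteness
  refine Measure.AbsolutelyContinuous.mk fun Z hZ hZ0 => ?_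
  rw [hZ.measure_eq_iSup_isCompact]
  simp only [ENNReal.iSup_eq_zero]
  intro K hKZ hK
  have hlim := ENNReal.Tendsto.const_mul
    ((tendsto_measure_cthickening_of_isCompact (μ := volume) hK).mono_left
      (nhdsWithin_le_nhds (s := Ioi 0))) (.inr hA)
  have hρK := ge_of_tendsto hlim <| by
    filter_upwards [self_mem_nhdsWithin] with δ hδ
    exact (measure_sq_le_lintegral_charFun_mul ρ hK isOpen_thickening
      (self_subset_thickening hδ K)).trans (by gcongr; exact thickening_subset_cthickening δ K)
  simpa [measure_mono_null hKZ hZ0] using hρK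

end Plancherel

section Energy

open Metric Set
open scoped ENNReal NNReal

variable {V : Type*} [NormedAddCommGroup V] [InnerProductSpace ℝ V] [MeasurableSpace V]
  [BorelSpace V]

lemma integral_charFun_comm [SecondCountableTopology V] (μ ν : Measure V) [IsFiniteMeasure μ]
    [IsFiniteMeasure ν] : ∫ t, charFun μ t ∂ν = ∫ x, charFun ν x ∂μ := by
  have hint : Integrable (fun p : V × V => Complex.exp (⟪p.2, p.1⟫ * Complex.I)) (ν.prod μ) :=
    .of_bound (by fun_prop) 1 (.of_forall fun p => (Complex.norm_exp_ofReal_mul_I _).le)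
  simp_rw [charFun_apply]
  rw [integral_integral_swap hint]
  simp_rw [real_inner_comm]

lemma lintegral_charFun_sq_le [SecondCountableTopology V] (γ ν : Measure V) [IsFiniteMeasure γ]
    [IsFiniteMeasure ν] :
    ∫⁻ ξ, ‖charFun ν ξ‖ₑ ^ 2 ∂γ ≤ ∫⁻ x, ∫⁻ y, ‖charFun γ (x - y)‖ₑ ∂ν ∂ν := by
  set ν' := ν.map (fun x => -x)
  have hsq (ξ : V) : charFun (ν ∗ ν') ξ = ((‖charFun ν ξ‖ ^ 2 : ℝ) : ℂ) := by
    have hν' : charFun ν' ξ = charFun ν (-ξ) := by simpa using charFun_map_smul (μ := ν) (-1) ξ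
    rw [charFun_conv, hν', charFun_neg, Complex.mul_conj, Complex.normSq_eq_norm_sq]
  have hint : Integrable (fun ξ => ‖charFun ν ξ‖ ^ 2) γ :=
    .of_bound (by fun_prop) (ν.real univ ^ 2) (.of_forall fun ξ => by
      simpa using pow_le_pow_left₀ (norm_nonneg _) (norm_charFun_le ξ) 2)
  calc ∫⁻ ξ, ‖charFun ν ξ‖ₑ ^ 2 ∂γ = ENNReal.ofReal (∫ ξ, ‖charFun ν ξ‖ ^ 2 ∂γ) := by
        rw [ofReal_integral_eq_lintegral_ofReal hint (.of_forall fun ξ => by positivity)]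
        simp_rw [ENNReal.ofReal_pow (norm_nonneg _), ofReal_norm]
    _ = ‖∫ z, charFun γ z ∂(ν ∗ ν')‖ₑ := by
        rw [← integral_charFun_comm]
        simp_rw [hsq]
        rw [integral_complex_ofReal, enorm_complex_ofReal,
          Real.enorm_of_nonneg (integral_nonneg fun ξ => by positivity)]
    _ ≤ ∫⁻ z, ‖charFun γ z‖ₑ ∂(ν ∗ ν') := enorm_integral_le_lintegral_enorm _
    _ = ∫⁻ x, ∫⁻ y, ‖charFun γ (x - y)‖ₑ ∂ν ∂ν := by
        rw [Measure.lintegral_conv (by fun_prop)]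
        congr! 2 with x
        rw [lintegral_map (by fun_prop) measurable_neg]
        simp_rw [sub_eq_add_neg]

variable [FiniteDimensional ℝ V]

variable (V) in
/-- The Gaussian measure on `V` with density `exp (-b ‖ξ‖²)`, not normalised to be a
probability measure. -/
noncomputable def gaussianVolume (b : ℝ) : Measure V :=
  volume.withDensity fun ξ => ENNReal.ofReal (Real.exp (-b * ‖ξ‖ ^ 2))

lemma isFiniteMeasure_gaussianVolume {b : ℝ} (hb : 0 < b) :
    IsFiniteMeasure (gaussianVolume V b) := by
  have hint := GaussianFourier.integrable_cexp_neg_mul_sq_norm_add (V := V) (b := b) (by simpa) 0 0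
  refine isFiniteMeasure_withDensity_ofReal (hint.norm.congr (.of_forall fun ξ => ?_)).2
  simp [Complex.norm_exp, ← Complex.ofReal_pow]

lemma norm_charFun_gaussianVolume {b : ℝ} (hb : 0 < b) (x : V) :
    ‖charFun (gaussianVolume V b) x‖ =
      (Real.pi / b) ^ (Module.finrank ℝ V / 2 : ℝ) * Real.exp (-(‖x‖ ^ 2 / (4 * b))) := by
  have h : charFun (gaussianVolume V b) x =
      ∫ ξ, Complex.exp (-b * ‖ξ‖ ^ 2 + Complex.I * ⟪x, ξ⟫) := by
    rw [charFun_apply, gaussianVolume,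
      integral_withDensity_eq_integral_toReal_smul (by fun_prop) (by simp)]
    congr! 2
    rw [ENNReal.toReal_ofReal (by positivity), Complex.real_smul, Complex.exp_add, real_inner_comm,
      mul_comm Complex.I]
    push_cast
    rfl
  rw [h, GaussianFourier.integral_cexp_neg_mul_sq_norm_add (by simpa), norm_mul,
    ← Complex.ofReal_div, Complex.norm_cpow_eq_rpow_re_of_pos (by positivity), Complex.norm_exp]
  congr 2
  · simp
  · rw [Complex.I_sq, ← Complex.ofReal_re (-(‖x‖ ^ 2 / (4 * b)))]
    congr 1
    push_cast
    ring

lemma summable_exp_neg_sq_div_four_mul_rpow (s : ℝ) :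
    Summable fun k : ℕ => Real.exp (-((k : ℝ) ^ 2 / 4)) * ((k : ℝ) + 1) ^ s := by
  obtain ⟨m, hm⟩ := exists_nat_ge s
  have hsum : Summable fun k : ℕ => (k : ℝ) ^ m * Real.exp (-1 * k) :=
    Real.summable_pow_mul_exp_neg_nat_mul m one_pos
  refine .of_nonneg_of_le (fun k => by positivity) (fun k => ?_)
    (((summable_nat_add_iff 1).2 hsum).mul_left (Real.exp 2))
  have hexp : Real.exp (-((k : ℝ) ^ 2 / 4)) ≤ Real.exp 2 * Real.exp (-1 * (k + 1 : ℝ)) := by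
    rw [← Real.exp_add, Real.exp_le_exp]
    nlinarith [sq_nonneg ((k : ℝ) - 2)]
  have hpow : ((k : ℝ) + 1) ^ s ≤ ((k : ℝ) + 1) ^ m := by
    rw [← Real.rpow_natCast]
    exact Real.rpow_le_rpow_of_exponent_le (by simp) hm
  calc Real.exp (-((k : ℝ) ^ 2 / 4)) * ((k : ℝ) + 1) ^ s
      ≤ (Real.exp 2 * Real.exp (-1 * (k + 1 : ℝ))) * ((k : ℝ) + 1) ^ m := by gcongr
    _ = Real.exp 2 * (((k + 1 : ℕ) : ℝ) ^ m * Real.exp (-1 * (k + 1 : ℕ))) := by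
        push_cast
        ring

lemma setLIntegral_ball_le_lintegral_gaussianVolume {R : ℝ} (hR : 0 < R) {f : V → ℝ≥0∞}
    (hf : Measurable f) :
    ∫⁻ ξ in ball 0 R, f ξ ≤
      ENNReal.ofReal (Real.exp 1) * ∫⁻ ξ, f ξ ∂gaussianVolume V (R ^ 2)⁻¹ := by
  rw [gaussianVolume, lintegral_withDensity_eq_lintegral_mul _ (by fun_prop) hf,
    ← lintegral_const_mul _ (by fun_prop), ← lintegral_indicator measurableSet_ball]
  refine lintegral_mono (indicator_le fun ξ hξ => ?_)
  have hξR : ‖ξ‖ ^ 2 ≤ R ^ 2 := by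
    gcongr
    exact (mem_ball_zero_iff.1 hξ).le
  have hle : 1 ≤ Real.exp 1 * Real.exp (-(R ^ 2)⁻¹ * ‖ξ‖ ^ 2) := by
    rw [← Real.exp_add, Real.one_le_exp_iff, neg_mul, ← sub_eq_add_neg, sub_nonneg,
      inv_mul_le_one₀ (by positivity)]
    exact hξR
  simp only [Pi.mul_apply]
  rw [← mul_assoc, ← ENNReal.ofReal_mul (by positivity)]
  exact le_mul_of_one_le_left zero_le (ENNReal.one_le_ofReal.2 hle)

lemma lintegral_charFun_gaussianVolume_le {ν : Measure V} {s : ℝ} {C : ℝ≥0} {R : ℝ} (hR : 0 < R)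
    {x : V} (hx : x ∈ ballGrowthSet ν s C) :
    ∫⁻ y, ‖charFun (gaussianVolume V (R ^ 2)⁻¹) (x - y)‖ₑ ∂ν ≤
      ENNReal.ofReal (Real.pi ^ (Module.finrank ℝ V / 2 : ℝ) * R ^ (Module.finrank ℝ V)) *
        (C * (∑' k : ℕ, ENNReal.ofReal (Real.exp (-((k : ℝ) ^ 2 / 4))) * ENNReal.ofReal (k + 1) ^ s)
          * ENNReal.ofReal R ^ (-s)) := by
  have hφ : AntitoneOn (fun t : ℝ => ENNReal.ofReal (Real.exp (-(t ^ 2 / 4)))) (Ici 0) :=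
    fun a ha b _ hab => by
      have : 0 ≤ a := ha
      beta_reduce
      gcongr
  have hnorm (y : V) : ‖charFun (gaussianVolume V (R ^ 2)⁻¹) (x - y)‖ₑ =
      ENNReal.ofReal (Real.pi ^ (Module.finrank ℝ V / 2 : ℝ) * R ^ (Module.finrank ℝ V)) *
        ENNReal.ofReal (Real.exp (-((R * dist x y) ^ 2 / 4))) := by
    rw [← ENNReal.ofReal_mul (by positivity), ← ofReal_norm,
      norm_charFun_gaussianVolume (by positivity), dist_eq_norm, div_inv_eq_mul,
      Real.mul_rpow (by positivity) (by positivity), ← Real.rpow_natCast R 2,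
      ← Real.rpow_mul hR.le, Nat.cast_ofNat, mul_div_cancel₀ _ (two_ne_zero' ℝ), Real.rpow_natCast]
    congr 4
    rw [Real.rpow_ofNat]
    field_simp
  simp_rw [hnorm]
  rw [lintegral_const_mul _ (by fun_prop)]
  gcongr
  exact lintegral_comp_mul_dist_le hx hφ hR

lemma exists_setLIntegral_ball_charFun_sq_le {ν : Measure V} [IsFiniteMeasure ν] {s : ℝ} {C : ℝ≥0}
    (hν : ∀ᵐ x ∂ν, x ∈ ballGrowthSet ν s C) :
    ∃ A : ℝ≥0∞, A ≠ ∞ ∧ ∀ R : ℝ, 0 < R →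
      ∫⁻ ξ in ball 0 R, ‖charFun ν ξ‖ₑ ^ 2 ≤ A * ENNReal.ofReal (R ^ (Module.finrank ℝ V - s)) := by
  set S : ℝ≥0∞ :=
    ∑' k : ℕ, ENNReal.ofReal (Real.exp (-((k : ℝ) ^ 2 / 4))) * ENNReal.ofReal (k + 1) ^ s
  have hS : S ≠ ∞ := by
    convert (summable_exp_neg_sq_div_four_mul_rpow s).tsum_ofReal_ne_top with k
    rw [ENNReal.ofReal_mul (by positivity), ENNReal.ofReal_rpow_of_pos (by positivity)]
  refine ⟨ENNReal.ofReal (Real.exp 1) * (ENNReal.ofReal (Real.pi ^ (Module.finrank ℝ V / 2 : ℝ)) *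
    (C * S) * ν univ), by finiteness, fun R hR => ?_⟩
  have := isFiniteMeasure_gaussianVolume (V := V) (b := (R ^ 2)⁻¹) (by positivity)
  have hmeas : Measurable fun ξ => ‖charFun ν ξ‖ₑ ^ 2 := by fun_prop
  calc ∫⁻ ξ in ball 0 R, ‖charFun ν ξ‖ₑ ^ 2
      ≤ ENNReal.ofReal (Real.exp 1) *
          ∫⁻ x, ∫⁻ y, ‖charFun (gaussianVolume V (R ^ 2)⁻¹) (x - y)‖ₑ ∂ν ∂ν :=
        (setLIntegral_ball_le_lintegral_gaussianVolume hR hmeas).trans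
          (mul_le_mul_right (lintegral_charFun_sq_le _ ν) _)
    _ ≤ ENNReal.ofReal (Real.exp 1) * ∫⁻ _, ENNReal.ofReal
          (Real.pi ^ (Module.finrank ℝ V / 2 : ℝ) * R ^ (Module.finrank ℝ V)) *
            (C * S * ENNReal.ofReal R ^ (-s)) ∂ν := by
        gcongr ENNReal.ofReal _ * ?_
        exact lintegral_mono_ae (hν.mono fun x hx => lintegral_charFun_gaussianVolume_le hR hx)
    _ = _ := by
        rw [lintegral_const, ENNReal.ofReal_mul (by positivity), sub_eq_add_neg,
          Real.rpow_add hR, Real.rpow_natCast, ENNReal.ofReal_mul (by positivity),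
          ENNReal.ofReal_rpow_of_pos hR]
        ring

end Energy

section Localisation

open Metric Set
open scoped ComplexConjugate ENNReal NNReal

variable {V : Type*} [NormedAddCommGroup V] [InnerProductSpace ℝ V] [FiniteDimensional ℝ V]
  [MeasurableSpace V] [BorelSpace V]

instance isFiniteMeasure_restrict_ball (p : V) (r : ℝ) :
    IsFiniteMeasure (volume.restrict (ball p r)) :=
  isFiniteMeasure_restrict.2 measure_ball_lt_top.ne

lemma charFun_restrict_ball (p : V) (r : ℝ) (x : V) :
    charFun (volume.restrict (ball p r)) x =
      charFun (volume.restrict (ball 0 r)) x * Complex.exp (⟪p, x⟫ * Complex.I) := by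
  have hmap : (volume.restrict (ball (0 : V) r)).map (· + p) = volume.restrict (ball p r) := by
    have hpre : ball 0 r = (· + p) ⁻¹' ball p r := by
      ext y
      simp [dist_eq_norm]
    rw [hpre, ((measurePreserving_add_right volume p).restrict_preimage measurableSet_ball).map_eq]
  rw [← hmap, charFun_map_add_const]

lemma ofReal_re_charFun_restrict_ball_zero (r : ℝ) (x : V) :
    ((charFun (volume.restrict (ball 0 r)) x).re : ℂ) = charFun (volume.restrict (ball 0 r)) x := by
  have hmap : (volume.restrict (ball (0 : V) r)).map ((-1 : ℝ) • ·) =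
      volume.restrict (ball 0 r) := by
    have hpre : ball (0 : V) r = ((-1 : ℝ) • ·) ⁻¹' ball 0 r := by
      ext y
      simp
    conv_lhs => rw [hpre]
    simp_rw [neg_one_smul]
    exact ((Measure.measurePreserving_neg volume).restrict_preimage measurableSet_ball).map_eq
  rw [← Complex.conj_eq_iff_re, ← charFun_neg, ← neg_one_smul ℝ x, ← charFun_map_smul, hmap]

lemma measureReal_ball_div_two_le_re_charFun {r M : ℝ} (hrM : r * M ≤ 1) {x : V}
    (hx : x ∈ closedBall 0 M) :
    volume.real (ball (0 : V) r) / 2 ≤ (charFun (volume.restrict (ball 0 r)) x).re := by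
  have hint : Integrable (fun ξ => Complex.exp (⟪ξ, x⟫ * Complex.I))
      (volume.restrict (ball (0 : V) r)) :=
    .of_bound (by fun_prop) 1 (.of_forall fun ξ => (Complex.norm_exp_ofReal_mul_I _).le)
  have hre : (charFun (volume.restrict (ball 0 r)) x).re = ∫ ξ in ball 0 r, Real.cos ⟪ξ, x⟫ := by
    rw [charFun_apply, ← RCLike.re_eq_complex_re, ← integral_re hint]
    simp [Complex.exp_ofReal_mul_I_re]
  have hcos : Integrable (fun ξ => Real.cos ⟪ξ, x⟫) (volume.restrict (ball (0 : V) r)) := by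
    simpa [Complex.exp_ofReal_mul_I_re] using hint.re
  have hconst : volume.real (ball (0 : V) r) / 2 = ∫ _ in ball (0 : V) r, (1 / 2 : ℝ) := by
    simp [div_eq_mul_inv]
  rw [hre, hconst]
  refine setIntegral_mono_on (integrable_const _) hcos measurableSet_ball fun ξ hξ => ?_
  have hξr := (mem_ball_zero_iff.1 hξ).le
  have hinner : |⟪ξ, x⟫| ≤ 1 :=
    calc |⟪ξ, x⟫| ≤ ‖ξ‖ * ‖x‖ := abs_real_inner_le_norm ξ x
      _ ≤ r * M := mul_le_mul hξr (mem_closedBall_zero_iff.1 hx) (norm_nonneg x)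
        ((norm_nonneg ξ).trans hξr)
      _ ≤ 1 := hrM
  have := Real.one_sub_sq_div_two_le_cos (x := ⟪ξ, x⟫)
  have := (sq_le_one_iff_abs_le_one ⟪ξ, x⟫).2 hinner
  linarith

lemma enorm_integral_charFun_restrict_ball_sq_le (θ : Measure V) [IsFiniteMeasure θ] (p : V)
    (r : ℝ) :
    ‖∫ x, charFun (volume.restrict (ball p r)) x ∂θ‖ₑ ^ 2 ≤
      volume (ball p r) * ∫⁻ ξ in ball p r, ‖charFun θ ξ‖ₑ ^ 2 := by
  rw [integral_charFun_comm]
  calc ‖∫ ξ in ball p r, charFun θ ξ‖ₑ ^ 2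
      ≤ (∫⁻ ξ in ball p r, 1 * ‖charFun θ ξ‖ₑ) ^ 2 := by
        simp_rw [one_mul]
        gcongr
        exact enorm_integral_le_lintegral_enorm _
    _ ≤ _ := by
        refine (lintegral_mul_sq_le (by fun_prop) (by fun_prop)).trans_eq ?_
        simp

/-- Local constancy of the Fourier transform: `θ` is `ν` divided by the Fourier transform of the
indicator of a ball so small that this transform is bounded below on the support of `ν`. -/
lemma exists_enorm_charFun_sq_le_setLIntegral_ball {ν : Measure V} [IsFiniteMeasure ν] {M : ℝ}
    (hν : ∀ᵐ x ∂ν, x ∈ closedBall 0 M) {r : ℝ} (hr : 0 < r) :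
    ∃ θ : Measure V, ∃ K : ℝ≥0, θ ≤ K • ν ∧
      ∀ p, ‖charFun ν p‖ₑ ^ 2 ≤
        volume (ball p r) * ∫⁻ ξ in ball p r, ‖charFun θ ξ‖ₑ ^ 2 := by
  obtain ⟨ε, hε, hεr, hεM⟩ : ∃ ε > 0, ε ≤ r ∧ ε * M ≤ 1 := by
    refine ⟨min r (|M| + 1)⁻¹, by positivity, min_le_left _ _, ?_⟩
    calc min r (|M| + 1)⁻¹ * M ≤ (|M| + 1)⁻¹ * (|M| + 1) :=
          mul_le_mul_of_nonneg (min_le_right _ _) (by linarith [le_abs_self M]) (by positivity)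
            (by positivity)
      _ = 1 := inv_mul_cancel₀ (by positivity)
  set c := volume.real (ball (0 : V) ε) / 2
  have hc : 0 < c := half_pos (ENNReal.toReal_pos (measure_ball_pos _ _ hε).ne' (by finiteness))
  set f : V → ℝ := fun x => (charFun (volume.restrict (ball 0 ε)) x).re
  have hf : ∀ᵐ x ∂ν, c ≤ f x := hν.mono fun x hx => measureReal_ball_div_two_le_re_charFun hεM hx
  have hfm : Measurable f := by fun_prop
  set θ : Measure V := ν.withDensity fun x => ENNReal.ofReal (f x)⁻¹
  have hθ : θ ≤ c⁻¹.toNNReal • ν := by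
    change _ ≤ ENNReal.ofReal c⁻¹ • ν
    rw [← withDensity_const]
    refine withDensity_mono (hf.mono fun x hx => ENNReal.ofReal_le_ofReal ?_)
    gcongr
  have := isFiniteMeasure_of_le _ hθ
  refine ⟨θ, c⁻¹.toNNReal, hθ, fun p => ?_⟩
  have hcharFun : charFun ν p = ∫ x, charFun (volume.restrict (ball p ε)) x ∂θ := by
    rw [integral_withDensity_eq_integral_toReal_smul (by fun_prop) (by simp), charFun_apply]
    refine integral_congr_ae (hf.mono fun x hx => ?_)
    have hfx : 0 < f x := hc.trans_le hx
    beta_reduce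
    rw [charFun_restrict_ball, ← ofReal_re_charFun_restrict_ball_zero,
      ENNReal.toReal_ofReal (by positivity), ← smul_mul_assoc, Complex.real_smul,
      ← Complex.ofReal_mul, inv_mul_cancel₀ hfx.ne', Complex.ofReal_one, one_mul, real_inner_comm]
  rw [hcharFun]
  refine (enorm_integral_charFun_restrict_ball_sq_le θ p ε).trans ?_
  gcongr

end Localisation

section Packing

open Metric Set
open scoped ENNReal

lemma lintegral_setLIntegral_ball {α X : Type*} [MeasurableSpace α] [PseudoMetricSpace X]
    [SecondCountableTopology X] [MeasurableSpace X] [OpensMeasurableSpace X] {ν : Measure α}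
    [SFinite ν] {μ : Measure X} [SFinite μ] {γ : α → X} (hγ : Measurable γ) {G : X → ℝ≥0∞}
    (hG : Measurable G) (δ : ℝ) :
    ∫⁻ a, ∫⁻ x in ball (γ a) δ, G x ∂μ ∂ν = ∫⁻ x, G x * ν (γ ⁻¹' ball x δ) ∂μ := by
  set S : Set (α × X) := {q | dist q.2 (γ q.1) < δ}
  have hS : MeasurableSet S := measurableSet_lt (by fun_prop) measurable_const
  calc ∫⁻ a, ∫⁻ x in ball (γ a) δ, G x ∂μ ∂ν
      = ∫⁻ a, ∫⁻ x, S.indicator (fun q => G q.2) (a, x) ∂μ ∂ν := by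
        simp_rw [← lintegral_indicator measurableSet_ball]
        rfl
    _ = ∫⁻ x, ∫⁻ a, S.indicator (fun q => G q.2) (a, x) ∂ν ∂μ :=
        lintegral_lintegral_swap ((hG.comp measurable_snd).indicator hS).aemeasurable
    _ = ∫⁻ x, G x * ν (γ ⁻¹' ball x δ) ∂μ := by
        congr! 2 with x
        rw [← lintegral_indicator_const (hγ measurableSet_ball)]
        congr! 2 with a
        simp [S, indicator, dist_comm]

variable {V : Type*} [NormedAddCommGroup V] [NormedSpace ℝ V]

lemma mul_dist_le_two_mul_dist_smul {e f : V} (he : ‖e‖ = 1) (hf : ‖f‖ = 1) {r t : ℝ} (hr : 0 ≤ r)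
    (ht : 0 ≤ t) : r * dist e f ≤ 2 * dist (r • e) (t • f) := by
  have hrt : |t - r| ≤ dist (r • e) (t • f) := by
    have h := abs_norm_sub_norm_le (t • f) (r • e)
    rwa [norm_smul_of_nonneg hr, norm_smul_of_nonneg ht, he, hf, mul_one, mul_one, ← dist_eq_norm,
      dist_comm] at h
  calc r * dist e f = ‖(r • e - t • f) + (t - r) • f‖ := by
        rw [dist_eq_norm, ← norm_smul_of_nonneg hr]
        congr 1
        module
    _ ≤ ‖r • e - t • f‖ + ‖(t - r) • f‖ := norm_add_le _ _
    _ = dist (r • e) (t • f) + |t - r| := by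
        rw [norm_smul, hf, mul_one, ← dist_eq_norm, Real.norm_eq_abs]
    _ ≤ 2 * dist (r • e) (t • f) := by linarith

lemma volume_restrict_preimage_smul_ball_le_one {e : V} (he : ‖e‖ = 1) {R : ℝ} (hR : 0 ≤ R)
    (ξ : V) :
    volume.restrict (Icc R (2 * R)) ((fun r : ℝ => r • e) ⁻¹' ball ξ (1 / 8)) ≤ 1 := by
  rw [Measure.restrict_apply' measurableSet_Icc]
  have hsub : (fun r : ℝ => r • e) ⁻¹' ball ξ (1 / 8) ∩ Icc R (2 * R) ⊆ ball ‖ξ‖ (1 / 8) := by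
    rintro r ⟨hr, hRr, -⟩
    have h := abs_norm_sub_norm_le (r • e) ξ
    rw [norm_smul_of_nonneg (hR.trans hRr), he, mul_one, ← dist_eq_norm] at h
    exact h.trans_lt hr
  refine (measure_mono hsub).trans ?_
  rw [Real.volume_ball, ENNReal.ofReal_le_one]
  norm_num

lemma sum_volume_restrict_preimage_smul_ball_le {R : ℝ} (hR : 1 ≤ R) {T : Finset V}
    (hT : (T : Set V) ⊆ sphere 0 1) (hsep : IsSeparated (ENNReal.ofReal R⁻¹) (T : Set V)) (ξ : V) :
    ∑ e ∈ T, volume.restrict (Icc R (2 * R)) ((fun r : ℝ => r • e) ⁻¹' ball ξ (1 / 8)) ≤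
      (ball 0 (3 * R)).indicator 1 ξ := by
  have hR0 : 0 < R := by positivity
  have hnorm {e : V} (he : e ∈ T) : ‖e‖ = 1 := mem_sphere_zero_iff_norm.1 (hT he)
  simp_rw [Measure.restrict_apply' measurableSet_Icc]
  by_cases hex : ∃ e ∈ T, ((fun r : ℝ => r • e) ⁻¹' ball ξ (1 / 8) ∩ Icc R (2 * R)).Nonempty
  · obtain ⟨e, he, r, hr, hRr, hrR⟩ := hex
    have hr0 : 0 ≤ r := hR0.le.trans hRr
    rw [mem_preimage, mem_ball] at hr
    have hξ : ξ ∈ ball 0 (3 * R) := by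
      have h := dist_triangle_left ξ 0 (r • e)
      rw [dist_zero_right (r • e), norm_smul_of_nonneg hr0, hnorm he] at h
      rw [mem_ball]
      linarith
    rw [indicator_of_mem hξ, Finset.sum_eq_single_of_mem e he]
    · rw [← Measure.restrict_apply' measurableSet_Icc]
      exact volume_restrict_preimage_smul_ball_le_one (hnorm he) hR0.le ξ
    · refine fun f hf hfe => measure_mono_null (fun t => ?_) measure_empty
      rintro ⟨ht, hRt, -⟩
      rw [mem_preimage, mem_ball] at ht
      have hdist : R⁻¹ < dist e f := by
        have h : ENNReal.ofReal R⁻¹ < edist e f := hsep he hf hfe.symm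
        rwa [edist_dist, ENNReal.ofReal_lt_ofReal_iff_of_nonneg (by positivity)] at h
      have hRdist : 1 < R * dist e f := (inv_lt_iff_one_lt_mul₀' hR0).1 hdist
      have hmul := mul_dist_le_two_mul_dist_smul (hnorm he) (hnorm hf) hr0 (hR0.le.trans hRt)
      have htri := dist_triangle_right (r • e) (t • f) ξ
      nlinarith [dist_nonneg (x := e) (y := f)]
  · simp only [not_exists, not_and, not_nonempty_iff_eq_empty] at hex
    rw [Finset.sum_eq_zero fun e he => by rw [hex e he, measure_empty]]
    exact zero_le

lemma sum_lintegral_setLIntegral_ball_smul_le [SecondCountableTopology V] [MeasurableSpace V]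
    [BorelSpace V] {μ : Measure V} [SFinite μ] {R : ℝ} (hR : 1 ≤ R) {T : Finset V}
    (hT : (T : Set V) ⊆ sphere 0 1) (hsep : IsSeparated (ENNReal.ofReal R⁻¹) (T : Set V))
    {G : V → ℝ≥0∞} (hG : Measurable G) :
    ∑ e ∈ T, ∫⁻ r in Icc R (2 * R), ∫⁻ ξ in ball (r • e) (1 / 8), G ξ ∂μ ≤
      ∫⁻ ξ in ball 0 (3 * R), G ξ ∂μ := by
  have hmeas (e : V) : Measurable fun ξ : V =>
      volume.restrict (Icc R (2 * R)) ((fun r : ℝ => r • e) ⁻¹' ball ξ (1 / 8)) := by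
    have hS : MeasurableSet {q : V × ℝ | dist (q.2 • e) q.1 < 1 / 8} :=
      measurableSet_lt (by fun_prop) measurable_const
    exact measurable_measure_prodMk_left hS
  calc ∑ e ∈ T, ∫⁻ r in Icc R (2 * R), ∫⁻ ξ in ball (r • e) (1 / 8), G ξ ∂μ
      = ∫⁻ ξ, G ξ * ∑ e ∈ T,
          volume.restrict (Icc R (2 * R)) ((fun r : ℝ => r • e) ⁻¹' ball ξ (1 / 8)) ∂μ := by
        simp_rw [Finset.mul_sum]
        refine (Finset.sum_congr rfl fun e _ => ?_).trans
          (lintegral_finsetSum T fun e _ => hG.mul (hmeas e)).symm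
        exact lintegral_setLIntegral_ball (by fun_prop) hG _
    _ ≤ ∫⁻ ξ, G ξ * (ball 0 (3 * R)).indicator 1 ξ ∂μ := by
        gcongr with ξ
        exact sum_volume_restrict_preimage_smul_ball_le hR hT hsep ξ
    _ = ∫⁻ ξ in ball 0 (3 * R), G ξ ∂μ := by
        rw [← lintegral_indicator measurableSet_ball]
        congr! 2 with ξ
        by_cases hξ : ξ ∈ ball 0 (3 * R) <;> simp [hξ]

end Packing

section Exceptional

open Filter Metric Set
open scoped ENNReal NNReal

lemma toENNReal_packingNumber_le {X : Type*} [PseudoEMetricSpace X] {ε : ℝ≥0} {A : Set X}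
    {N : ℝ≥0∞} (h : ∀ T : Finset X, (T : Set X) ⊆ A → IsSeparated ε (T : Set X) → T.card ≤ N) :
    packingNumber ε A ≤ N := by
  simp only [packingNumber, ENat.toENNReal_iSup, iSup_le_iff]
  intro D hDA hD
  rw [← ENNReal.tsum_set_one, ENNReal.tsum_eq_iSup_sum]
  refine iSup_le fun T => ?_
  have hTD : (T.map (Function.Embedding.subtype (· ∈ D)) : Set X) ⊆ D := by simp
  simpa using h _ (hTD.trans hDA) (hD.subset hTD)

lemma setLIntegral_Ici_ne_top_of_eventually_dyadic_le {f : ℝ → ℝ≥0∞} {B : ℝ≥0∞} (hB : B ≠ ∞)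
    (hfB : ∀ r, f r ≤ B) {a : ℕ → ℝ≥0∞} (ha : ∑' k, a k ≠ ∞)
    (hfa : ∀ᶠ k in atTop, ∫⁻ r in Icc (2 ^ k) (2 * 2 ^ k), f r ≤ a k) :
    ∫⁻ r in Ici 0, f r ≠ ∞ := by
  obtain ⟨m, hm⟩ := eventually_atTop.1 hfa
  have hcover : Ici (0 : ℝ) ⊆
      Icc 0 (2 ^ m) ∪ ⋃ k : ℕ, Icc (2 ^ (k + m)) (2 * 2 ^ (k + m)) := fun r hr => by
    rcases le_total r (2 ^ m) with hrm | hrm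
    · exact .inl ⟨hr, hrm⟩
    · obtain ⟨k, hkr, hrk⟩ := exists_nat_pow_near ((one_le_div (by positivity)).2 hrm) one_lt_two
      rw [le_div_iff₀ (by positivity)] at hkr
      rw [div_lt_iff₀ (by positivity)] at hrk
      refine .inr (mem_iUnion.2 ⟨k, ?_, ?_⟩)
      · rwa [pow_add]
      · exact hrk.le.trans_eq (by ring)
  have hlow : ∫⁻ r in Icc 0 (2 ^ m), f r ≠ ∞ :=
    (setLIntegral_lt_top_of_le_nnreal (by simp) ⟨B.toNNReal, fun r _ =>
      (hfB r).trans_eq (ENNReal.coe_toNNReal hB).symm⟩).ne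
  refine ne_top_of_le_ne_top (ENNReal.add_ne_top.2 ⟨hlow, ha⟩) ?_
  calc ∫⁻ r in Ici 0, f r
      ≤ (∫⁻ r in Icc 0 (2 ^ m), f r) +
          ∑' k : ℕ, ∫⁻ r in Icc (2 ^ (k + m)) (2 * 2 ^ (k + m)), f r :=
        (lintegral_mono_set hcover).trans <| (lintegral_union_le _ _ _).trans <| by
          gcongr
          exact lintegral_iUnion_le _ _
    _ ≤ (∫⁻ r in Icc 0 (2 ^ m), f r) + ∑' k : ℕ, a (k + m) := by
        gcongr with k
        exact hm _ (by lia)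
    _ ≤ (∫⁻ r in Icc 0 (2 ^ m), f r) + ∑' k, a k := by
        gcongr _ + ?_
        exact ENNReal.tsum_comp_le_tsum_of_injective (add_left_injective m) a

lemma lintegral_le_two_mul_setLIntegral_Ici_of_even {f : ℝ → ℝ≥0∞} (hf : f.Even) :
    ∫⁻ r, f r ≤ 2 * ∫⁻ r in Ici 0, f r := by
  have hneg : ∫⁻ r in Iic 0, f r = ∫⁻ r in Ici 0, f r := by
    have := (Measure.measurePreserving_neg (volume : Measure ℝ)).setLIntegral_comp_preimage_emb
      (MeasurableEquiv.neg ℝ).measurableEmbedding f (Ici 0)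
    simpa [hf _] using this
  calc ∫⁻ r, f r = ∫⁻ r in Iic 0 ∪ Ici 0, f r := by rw [Iic_union_Ici, setLIntegral_univ]
    _ ≤ (∫⁻ r in Iic 0, f r) + ∫⁻ r in Ici 0, f r := lintegral_union_le f _ _
    _ = 2 * ∫⁻ r in Ici 0, f r := by rw [hneg, two_mul]

variable {V : Type*} [NormedAddCommGroup V] [InnerProductSpace ℝ V] [MeasurableSpace V]

/-- The energy of the Fourier transform of `ν` on the `k`-th dyadic segment of the ray in
direction `e`. -/
noncomputable def dyadicEnergy (ν : Measure V) (k : ℕ) (e : V) : ℝ≥0∞ :=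
  ∫⁻ r in Icc (2 ^ k : ℝ) (2 * 2 ^ k), ‖charFun ν (r • e)‖ₑ ^ 2

/-- The unit vectors along which the dyadic energies of `ν` exceed the summable sequence
`(k + 1)⁻²` infinitely often. Outside this set the Fourier transform of `ν` is square integrable
along the line in the given direction. -/
def exceptionalDirections (ν : Measure V) : Set V :=
  limsup (fun k : ℕ =>
    {e ∈ sphere 0 1 | ENNReal.ofReal (((k : ℝ) + 1) ^ 2)⁻¹ < dyadicEnergy ν k e}) atTop

lemma exceptionalDirections_subset_sphere (ν : Measure V) :
    exceptionalDirections ν ⊆ sphere 0 1 := by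
  intro e he
  rw [exceptionalDirections, mem_limsup_iff_frequently_mem] at he
  obtain ⟨k, hk⟩ := he.exists
  exact hk.1

lemma lintegral_charFun_smul_sq_ne_top_of_notMem_exceptionalDirections {ν : Measure V}
    [IsFiniteMeasure ν] {e : V} (he : e ∈ sphere 0 1) (heν : e ∉ exceptionalDirections ν) :
    ∫⁻ r : ℝ, ‖charFun ν (r • e)‖ₑ ^ 2 ≠ ∞ := by
  have heven : (fun r : ℝ => ‖charFun ν (r • e)‖ₑ ^ 2).Even := fun r => by
    beta_reduce
    rw [neg_smul, charFun_neg, RCLike.enorm_conj]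
  refine ne_top_of_le_ne_top (ENNReal.mul_ne_top ENNReal.ofNat_ne_top ?_)
    (lintegral_le_two_mul_setLIntegral_Ici_of_even heven)
  refine setLIntegral_Ici_ne_top_of_eventually_dyadic_le (B := ν univ ^ 2)
    (a := fun k => ENNReal.ofReal (((k : ℝ) + 1) ^ 2)⁻¹) (by finiteness) (fun r => ?_) ?_ ?_
  · gcongr
    rw [← ofReal_norm, ← ofReal_measureReal]
    exact ENNReal.ofReal_le_ofReal (norm_charFun_le _)
  · have hsum : Summable fun k : ℕ => (((k : ℝ) + 1) ^ 2)⁻¹ := by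
      simpa using (summable_nat_add_iff 1).2 (Real.summable_nat_pow_inv.2 one_lt_two)
    exact hsum.tsum_ofReal_ne_top
  · rw [exceptionalDirections, mem_limsup_iff_frequently_mem, not_frequently] at heν
    filter_upwards [heν] with k hk
    exact not_lt.1 fun hlt => hk ⟨he, hlt⟩

variable [BorelSpace V]

lemma charFun_map_inner (ν : Measure V) (e : V) (r : ℝ) :
    charFun (ν.map (⟪·, e⟫)) r = charFun ν (r • e) := by
  rw [charFun_apply, charFun_apply, integral_map (by fun_prop) (by fun_prop)]
  simp [inner_smul_right]

lemma map_inner_absolutelyContinuous_of_notMem_exceptionalDirections {ν : Measure V}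
    [IsFiniteMeasure ν] {e : V} (he : e ∈ sphere 0 1) (heν : e ∉ exceptionalDirections ν) :
    ν.map (⟪·, e⟫) ≪ volume := by
  refine absolutelyContinuous_of_lintegral_charFun_sq_ne_top _ ?_
  simp_rw [charFun_map_inner]
  exact lintegral_charFun_smul_sq_ne_top_of_notMem_exceptionalDirections he heν

variable [FiniteDimensional ℝ V]

lemma exists_sum_dyadicEnergy_le {ν : Measure V} [IsFiniteMeasure ν] {s : ℝ} {C : ℝ≥0}
    (hν : ∀ᵐ x ∂ν, x ∈ ballGrowthSet ν s C) {M : ℝ} (hνM : ∀ᵐ x ∂ν, x ∈ closedBall 0 M) :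
    ∃ B : ℝ≥0∞, B ≠ ∞ ∧ ∀ (k : ℕ) (T : Finset V), (T : Set V) ⊆ sphere 0 1 →
      IsSeparated (ENNReal.ofReal (2 ^ k)⁻¹) (T : Set V) →
        ∑ e ∈ T, dyadicEnergy ν k e ≤
          B * ENNReal.ofReal ((2 ^ k : ℝ) ^ (Module.finrank ℝ V - s)) := by
  obtain ⟨θ, K, hθν, hθ⟩ := exists_enorm_charFun_sq_le_setLIntegral_ball hνM (r := 1 / 8)
    (by norm_num)
  have := isFiniteMeasure_of_le _ hθν
  have hθs : ∀ᵐ x ∂θ, x ∈ ballGrowthSet θ s (K * C) :=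
    (Measure.absolutelyContinuous_of_le_smul hθν).ae_le <|
      hν.mono fun x hx => ballGrowthSet_subset_of_le_smul hθν s C hx
  obtain ⟨A, hA, hAθ⟩ := exists_setLIntegral_ball_charFun_sq_le hθs
  set d := Module.finrank ℝ V - s
  set v : ℝ≥0∞ := volume (ball (0 : V) (1 / 8))
  refine ⟨v * (A * ENNReal.ofReal (3 ^ d)), by finiteness, fun k T hT hsep => ?_⟩
  calc ∑ e ∈ T, dyadicEnergy ν k e
      ≤ ∑ e ∈ T, ∫⁻ r in Icc (2 ^ k : ℝ) (2 * 2 ^ k),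
          v * ∫⁻ ξ in ball (r • e) (1 / 8), ‖charFun θ ξ‖ₑ ^ 2 := by
        unfold dyadicEnergy
        gcongr with e _ r
        simpa only [Measure.addHaar_ball_center] using hθ (r • e)
    _ = v * ∑ e ∈ T, ∫⁻ r in Icc (2 ^ k : ℝ) (2 * 2 ^ k),
          ∫⁻ ξ in ball (r • e) (1 / 8), ‖charFun θ ξ‖ₑ ^ 2 := by
        rw [Finset.mul_sum]
        exact Finset.sum_congr rfl fun e _ => lintegral_const_mul' _ _ measure_ball_lt_top.ne
    _ ≤ v * ∫⁻ ξ in ball 0 (3 * 2 ^ k), ‖charFun θ ξ‖ₑ ^ 2 := by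
        gcongr
        exact sum_lintegral_setLIntegral_ball_smul_le (one_le_pow₀ one_le_two) hT hsep
          (by fun_prop)
    _ ≤ v * (A * ENNReal.ofReal ((3 * 2 ^ k) ^ d)) := by
        gcongr
        exact hAθ _ (by positivity)
    _ = _ := by
        rw [Real.mul_rpow (by positivity) (by positivity), ENNReal.ofReal_mul (by positivity)]
        ring

lemma dimH_exceptionalDirections_le {ν : Measure V} [IsFiniteMeasure ν] {s : ℝ} {C : ℝ≥0}
    (hν : ∀ᵐ x ∂ν, x ∈ ballGrowthSet ν s C) {M : ℝ} (hνM : ∀ᵐ x ∂ν, x ∈ closedBall 0 M) :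
    dimH (exceptionalDirections ν) ≤ ENNReal.ofReal (Module.finrank ℝ V - s) := by
  obtain ⟨B, hB, hsum⟩ := exists_sum_dyadicEnergy_le hν hνM
  refine dimH_limsup_le hB 2 fun k => ?_
  set d := Module.finrank ℝ V - s
  set a : ℝ := ((k : ℝ) + 1) ^ 2
  have ha : 0 < a := by positivity
  set A : Set V := {e ∈ sphere 0 1 | ENNReal.ofReal a⁻¹ < dyadicEnergy ν k e}
  have hscale : (((1 / 2 : ℝ≥0) ^ k : ℝ≥0) : ℝ≥0∞) = ENNReal.ofReal (2 ^ k)⁻¹ := by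
    rw [ENNReal.ofReal, Real.toNNReal_inv, Real.toNNReal_pow zero_le_two, one_div, inv_pow]
    norm_num
  refine (ENat.toENNReal_mono (coveringNumber_le_packingNumber _ A)).trans
    (toENNReal_packingNumber_le fun T hTA hsep => ?_)
  rw [hscale] at hsep
  calc (T.card : ℝ≥0∞) = ENNReal.ofReal a * ∑ _ ∈ T, ENNReal.ofReal a⁻¹ := by
        rw [Finset.sum_const, nsmul_eq_mul, mul_left_comm, ← ENNReal.ofReal_mul ha.le,
          mul_inv_cancel₀ ha.ne', ENNReal.ofReal_one, mul_one]
    _ ≤ ENNReal.ofReal a * ∑ e ∈ T, dyadicEnergy ν k e := by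
        gcongr with e he
        exact (hTA he).2.le
    _ ≤ ENNReal.ofReal a * (B * ENNReal.ofReal ((2 ^ k : ℝ) ^ d)) := by
        gcongr
        exact hsum k T (fun e he => (hTA he).1) hsep
    _ = B * ENNReal.ofReal (a * (2 ^ k : ℝ) ^ d) := by
        rw [ENNReal.ofReal_mul ha.le]
        ring

end Exceptional

section Projection

open Metric Set
open scoped NNReal

variable {V : Type*} [NormedAddCommGroup V] [InnerProductSpace ℝ V] [FiniteDimensional ℝ V]
  [MeasurableSpace V] [BorelSpace V]

lemma exists_dimH_le_forall_map_inner_absolutelyContinuous (ν : Measure V) [IsFiniteMeasure ν]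
    {s : ℝ} (hν : ∀ᵐ x ∂ν, x ∈ ⋃ j : ℕ, ballGrowthSet ν s j) :
    ∃ X ⊆ sphere (0 : V) 1, dimH X ≤ ENNReal.ofReal (Module.finrank ℝ V - s) ∧
      ∀ e ∈ sphere (0 : V) 1, e ∉ X → ν.map (⟪·, e⟫) ≪ volume := by
  set P : ℕ × ℕ → Set V := fun p => ballGrowthSet ν s p.1 ∩ closedBall 0 p.2
  have hP (p : ℕ × ℕ) : MeasurableSet (P p) :=
    (isClosed_ballGrowthSet ν s p.1).measurableSet.inter measurableSet_closedBall
  have hcover : ∀ᵐ x ∂ν, x ∈ ⋃ p, P p := hν.mono fun x hx => by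
    obtain ⟨j, hj⟩ := mem_iUnion.1 hx
    obtain ⟨m, hm⟩ := exists_nat_ge ‖x‖
    exact mem_iUnion.2 ⟨(j, m), hj, mem_closedBall_zero_iff.2 hm⟩
  have hgrowth (p : ℕ × ℕ) :
      ∀ᵐ x ∂ν.restrict (P p), x ∈ ballGrowthSet (ν.restrict (P p)) s p.1 := by
    have hle : ν.restrict (P p) ≤ (1 : ℝ≥0) • ν := by simpa using Measure.restrict_le_self
    filter_upwards [ae_restrict_mem (hP p)] with x hx
    simpa using ballGrowthSet_subset_of_le_smul hle s p.1 hx.1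
  have hbdd (p : ℕ × ℕ) : ∀ᵐ x ∂ν.restrict (P p), x ∈ closedBall 0 (p.2 : ℝ) :=
    (ae_restrict_mem (hP p)).mono fun x hx => hx.2
  refine ⟨⋃ p, exceptionalDirections (ν.restrict (P p)),
    iUnion_subset fun p => exceptionalDirections_subset_sphere _, ?_, fun e he heX => ?_⟩
  · rw [dimH_iUnion]
    exact iSup_le fun p => dimH_exceptionalDirections_le (hgrowth p) (hbdd p)
  · have hac (p : ℕ × ℕ) : (ν.restrict (P p)).map (⟪·, e⟫) ≪ volume :=
      map_inner_absolutelyContinuous_of_notMem_exceptionalDirections he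
        fun hp => heX (mem_iUnion.2 ⟨p, hp⟩)
    have hproj : Measurable fun x : V => ⟪x, e⟫ := by fun_prop
    have hle : ν ≤ Measure.sum fun p => ν.restrict (P p) :=
      (Measure.restrict_eq_self_of_ae_mem hcover).ge.trans Measure.restrict_iUnion_le
    refine ((Measure.absolutelyContinuous_of_le hle).map hproj).trans ?_
    rw [Measure.map_sum hproj.aemeasurable]
    exact Measure.absolutelyContinuous_sum_left hac

end Projection

theorem strong_line_projection_positive_measure_general {V : Type*} [NormedAddCommGroup V]
    [InnerProductSpace ℝ V] [FiniteDimensional ℝ V] [MeasurableSpace V] [BorelSpace V] {s : ℝ}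
    (hs : 0 < s) {E : Set V} (hE : μH[s] E ≠ ⊤) :
    ∃ X ⊆ Metric.sphere (0 : V) 1, dimH X ≤ ENNReal.ofReal (Module.finrank ℝ V - s) ∧
      ∀ e ∈ Metric.sphere (0 : V) 1, e ∉ X → ∀ F ⊆ E, 0 < μH[s] F →
        0 < volume ((fun x => ⟪x, e⟫) '' F) := by
  set ν : Measure V := μH[s].restrict E
  have : IsFiniteMeasure ν := isFiniteMeasure_restrict.2 hE
  have hν : ∀ᵐ x ∂ν, x ∈ ⋃ j : ℕ, ballGrowthSet ν s j :=
    ae_restrict_of_ae (hausdorffMeasure_compl_iUnion_ballGrowthSet ν hs)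
  obtain ⟨X, hXsphere, hXdim, hX⟩ := exists_dimH_le_forall_map_inner_absolutelyContinuous ν hν
  refine ⟨X, hXsphere, hXdim, fun e he heX F hFE hF => ?_⟩
  contrapose! hF
  calc μH[s] F = ν F := (Measure.restrict_eq_self _ hFE).symm
    _ ≤ ν.map (⟪·, e⟫) ((⟪·, e⟫) '' F) := Measure.le_map_apply_image (by fun_prop) F
    _ ≤ 0 := (hX e he heX (nonpos_iff_eq_zero.1 hF)).le

/-- **Strong projection theorem with exceptional-set dimension bound, case `m = 1`, `s > 1`.**
If `E ⊆ ℝⁿ` is `𝓗ˢ`-measurable with `0 < 𝓗ˢ(E) < ∞` where `s = dim_H E > 1`, then there is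
a set `X` of unit vectors with `dim_H X ≤ n − s` such that for every unit vector `e ∉ X`
and every `𝓗ˢ`-measurable `F ⊆ E` with `𝓗ˢ(F) > 0`, the set `{⟨x,e⟩ : x ∈ F} ⊆ ℝ` has
positive Lebesgue measure. -/
theorem strong_line_projection_positive_measure (n : ℕ) (hn : 2 ≤ n) (s : ℝ)
    (hs : 1 < s) (E : Set (EuclideanSpace ℝ (Fin n)))
    (hdimE : dimH E = ENNReal.ofReal s)
    (hE : NullMeasurableSet E μH[s])
    (hE0 : 0 < μH[s] E) (hEfin : μH[s] E < ⊤) :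
    ∃ X : Set (EuclideanSpace ℝ (Fin n)),
      X ⊆ Metric.sphere (0 : EuclideanSpace ℝ (Fin n)) 1 ∧
      dimH X ≤ ENNReal.ofReal ((n : ℝ) - s) ∧
      ∀ e ∈ Metric.sphere (0 : EuclideanSpace ℝ (Fin n)) 1, e ∉ X →
        ∀ F : Set (EuclideanSpace ℝ (Fin n)), F ⊆ E →
          NullMeasurableSet F μH[s] → 0 < μH[s] F →
          0 < volume ((fun x => ⟪x, e⟫) '' F) := by
  obtain ⟨X, hXsphere, hXdim, hX⟩ :=
    strong_line_projection_positive_measure_general (zero_lt_one.trans hs) hEfin.ne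
  exact ⟨X, hXsphere, by simpa using hXdim, fun e he heX F hFE _ => hX e he heX F hFE⟩
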